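/- Let A be a right regular band, c ∈ A a central element, and I1, I2 subsemigroups of A with A = I1 ×_c I2. Then the relation x = ⟨⟨x1,x2⟩⟩_c defines a semigroup isomorphism between the direct product I1 × I2 (with componentwise multiplication) and A: there is a bijection Φ : I1 × I2 → A such that Φ(x1,x2) = x iff x = ⟨⟨x1,x2⟩⟩_c, and Φ((x1,x2)·(z1,z2)) = Φ(x1,x2)·Φ(z1,z2) for all x1, z1 ∈ I1, x2, z2 ∈ I2. -/

import Mathlib

namespace RRBFactor

variable {A : Type*} [Semigroup A]

/-- The underlying order of a right regular band: `x ≤ y ↔ x·y = x`. -/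
def rle (x y : A) : Prop := x * y = x

/-- `s` is the least upper bound of `{a, b}` with respect to the underlying
order of a right regular band. -/
def IsLub2 (a b s : A) : Prop :=
  rle a s ∧ rle b s ∧ ∀ t : A, rle a t → rle b t → rle s t

/-- `IsPair c x1 x2 x` expresses `x = ⟨⟨x1,x2⟩⟩_c`: the conjunction of
(comm), (dist), (p1), (p2) and (prod). -/
def IsPair (c x1 x2 x : A) : Prop :=
  (x * x1 = x1 * x ∧ x * x2 = x2 * x) ∧
  IsLub2 (x * x1) (x * x2) x ∧
  IsLub2 (x * x1) (c * x1) x1 ∧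
  IsLub2 (x * x2) (c * x2) x2 ∧
  x1 * x2 = x * c

/-- A subset is a subsemigroup when it is closed under multiplication. -/
def MulClosed (I : Set A) : Prop := ∀ a ∈ I, ∀ b ∈ I, a * b ∈ I

/-- `CDirect c I1 I2` expresses `A = I1 ×_c I2`: the conjunction of (Perm),
(Mod1), (Mod2), (Abs) (in both symmetric forms), (Exi) and (Onto). -/
def CDirect (c : A) (I1 I2 : Set A) : Prop :=
  -- (Perm)
  (∀ x1 ∈ I1, ∀ x2 ∈ I2, x1 * x2 = x2 * x1) ∧
  -- (Mod1)
  (∀ x y : A, ∀ x1 ∈ I1, ∀ x2 ∈ I2, rle (x * c) (x1 * x2) →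
    ∀ s : A, IsLub2 (x * x1) (x * x2) s →
      IsLub2 (x * x1 * y) (x * x2 * y) (s * y) ∧
      IsLub2 (y * x * x1) (y * x * x2) (y * s)) ∧
  -- (Mod2)
  (∀ x y : A, ∀ x1 ∈ I1, ∀ x2 ∈ I2, rle (x1 * x2) x →
    (∀ s : A, IsLub2 (x * x1) (c * x1) s →
      IsLub2 (x * x1 * y) (c * x1 * y) (s * y) ∧
      IsLub2 (y * x * x1) (y * c * x1) (y * s)) ∧
    (∀ s : A, IsLub2 (x * x2) (c * x2) s →
      IsLub2 (x * x2 * y) (c * x2 * y) (s * y) ∧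
      IsLub2 (y * x * x2) (y * c * x2) (y * s))) ∧
  -- (Abs)
  (∀ x1 ∈ I1, ∀ y1 ∈ I1, ∀ z2 ∈ I2, ∀ s : A,
      (IsLub2 x1 (y1 * z2) s ↔ IsLub2 x1 (y1 * c) s)) ∧
  (∀ x2 ∈ I2, ∀ y2 ∈ I2, ∀ z1 ∈ I1, ∀ s : A,
      (IsLub2 x2 (y2 * z1) s ↔ IsLub2 x2 (y2 * c) s)) ∧
  -- (Exi)
  (∀ x1 ∈ I1, ∀ x2 ∈ I2, ∃ x : A, IsPair c x1 x2 x) ∧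
  -- (Onto)
  (∀ x : A, ∃ x1 ∈ I1, ∃ x2 ∈ I2, IsPair c x1 x2 x)

end RRBFactor

open RRBFactor

/-!
By (Mod1) and (Mod2), the least upper bounds describing `z = ⟨⟨z₁, z₂⟩⟩_c` may be multiplied by
arbitrary elements on either side. Decomposing the middle factor accordingly shows that every
product `a * y * b` with `a ∈ I₁` and `b ∈ I₂` lies below `c`. Consequently, in the join
`a * y * z = a * y * z * z₁ ∨ a * y * z * z₂` the second term lies below `z * c = z₁ * z₂ ≤ z₁`,
so that `a * y * z ≤ z₁`. For two decompositions of `x`, with first coordinates `x₁` and `y₁`, this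
gives `x * x₁ ≤ y₁`, while (Abs) gives `c * x₁ ≤ y₁`, so `x₁ ≤ y₁` by (p1); by symmetry, the
coordinates of `x` are unique. The same inequality yields `z * a * z₁ = a * z`, which reduces the
conditions defining `⟨⟨x₁ * z₁, x₂ * z₂⟩⟩_c = x * z` to those for `x` and `z`.
-/

namespace RRBFactor

/-- Right regular bands: idempotent semigroups satisfying `x * y * x = y * x`. A `Prop`-valued
mixin, so that the order `rle` refers to the given multiplication of the semigroup. -/
class IsRightRegularBand (A : Type*) [Semigroup A] : Prop where
  mul_self (x : A) : x * x = x
  mul_mul_self (x y : A) : x * y * x = y * x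

open IsRightRegularBand

variable {A : Type*} [Semigroup A]

section Order

variable {a b c d s t u v x y z : A}

theorem rle.mul_eq (h : rle x y) : x * y = x := h

theorem rle.trans (hxy : rle x y) (hyz : rle y z) : rle x z :=
  calc x * z = x * y * z := by rw [hxy.mul_eq]
    _ = x := by rw [mul_assoc, hyz.mul_eq, hxy.mul_eq]

theorem rle.mul_right_of_commute (h : rle u c) (hc : Commute c v) : rle (u * v) c :=
  calc u * v * c = u * c * v := by rw [mul_assoc, ← hc.eq, mul_assoc]
    _ = u * v := by rw [h.mul_eq]

theorem IsLub2.symm (h : IsLub2 a b s) : IsLub2 b a s :=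
  ⟨h.2.1, h.1, fun t hb ha ↦ h.2.2 t ha hb⟩

theorem IsLub2.least (h : IsLub2 a b s) (ha : rle a t) (hb : rle b t) : rle s t := h.2.2 t ha hb

theorem IsLub2.trans_left (hs : IsLub2 a b s) (ht : IsLub2 s d t) (hbd : rle b d) :
    IsLub2 a d t :=
  ⟨hs.1.trans ht.1, ht.2.1, fun _ ha hd ↦ ht.least (hs.least ha (hbd.trans hd)) hd⟩

variable [IsRightRegularBand A]

theorem rle_refl (x : A) : rle x x := mul_self x

theorem mul_rle_right (x y : A) : rle (x * y) y := by
  rw [rle, mul_assoc, mul_self]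

theorem mul_rle_left_of_commute (h : Commute c x) : rle (x * c) x :=
  h.eq ▸ mul_rle_right c x

theorem rle.antisymm (hxy : rle x y) (hyx : rle y x) : x = y :=
  calc x = x * y * x := by rw [hxy.mul_eq, mul_self]
    _ = y := by rw [mul_mul_self, hyx.mul_eq]

theorem isLub2_left_of_rle (h : rle b a) : IsLub2 a b a :=
  ⟨rle_refl a, h, fun _ ha _ ↦ ha⟩

theorem IsLub2.unique (hs : IsLub2 a b s) (ht : IsLub2 a b t) : s = t :=
  (hs.least ht.1 ht.2.1).antisymm (ht.least hs.1 hs.2.1)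

theorem IsLub2.eq_left (hs : IsLub2 a b s) (h : rle b a) : s = a :=
  hs.unique (isLub2_left_of_rle h)

end Order

namespace IsPair

variable {c x x₁ x₂ : A}

theorem commute_fst (hx : IsPair c x₁ x₂ x) : Commute x x₁ := hx.1.1

theorem commute_snd (hx : IsPair c x₁ x₂ x) : Commute x x₂ := hx.1.2

theorem isLub2 (hx : IsPair c x₁ x₂ x) : IsLub2 (x * x₁) (x * x₂) x := hx.2.1

theorem isLub2_fst (hx : IsPair c x₁ x₂ x) : IsLub2 (x * x₁) (c * x₁) x₁ := hx.2.2.1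

theorem mul_eq (hx : IsPair c x₁ x₂ x) : x₁ * x₂ = x * c := hx.2.2.2.2

theorem symm (hx : IsPair c x₁ x₂ x) (h : Commute x₁ x₂) : IsPair c x₂ x₁ x :=
  let ⟨⟨hc₁, hc₂⟩, hlub, hlub₁, hlub₂, hmul⟩ := hx
  ⟨⟨hc₂, hc₁⟩, hlub.symm, hlub₂, hlub₁, h.eq.symm.trans hmul⟩

theorem commute [IsRightRegularBand A] (hx : IsPair c x₁ x₂ x) : Commute c x :=
  calc c * x = x₁ * x₂ * x := by rw [hx.mul_eq, mul_mul_self]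
    _ = x * (x₁ * x₂) := by
      rw [mul_assoc, ← hx.commute_snd.eq, ← mul_assoc, ← hx.commute_fst.eq, mul_assoc]
    _ = x * c := by rw [hx.mul_eq, ← mul_assoc, mul_self]

theorem mul_rle [IsRightRegularBand A] (hx : IsPair c x₁ x₂ x) : rle (x₁ * x₂) x :=
  hx.mul_eq ▸ mul_rle_left_of_commute hx.commute

end IsPair

namespace CDirect

variable {c : A} {I₁ I₂ : Set A} {a b x x₁ x₂ y y₁ y₂ z z₁ z₂ : A}

theorem perm (h : CDirect c I₁ I₂) (h₁ : x₁ ∈ I₁) (h₂ : x₂ ∈ I₂) : Commute x₁ x₂ :=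
  h.1 x₁ h₁ x₂ h₂

theorem exists_isPair (h : CDirect c I₁ I₂) (h₁ : x₁ ∈ I₁) (h₂ : x₂ ∈ I₂) :
    ∃ x, IsPair c x₁ x₂ x :=
  h.2.2.2.2.2.1 x₁ h₁ x₂ h₂

theorem exists_coords (h : CDirect c I₁ I₂) (x : A) :
    ∃ x₁ ∈ I₁, ∃ x₂ ∈ I₂, IsPair c x₁ x₂ x :=
  h.2.2.2.2.2.2 x

theorem symm (h : CDirect c I₁ I₂) : CDirect c I₂ I₁ := by
  obtain ⟨perm, mod1, mod2, abs₁, abs₂, exi, onto⟩ := h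
  refine ⟨fun x₂ h₂ x₁ h₁ ↦ (perm x₁ h₁ x₂ h₂).symm, ?_, ?_, abs₂, abs₁, ?_, ?_⟩
  · intro x y x₂ h₂ x₁ h₁ hle s hs
    have := mod1 x y x₁ h₁ x₂ h₂ (perm x₁ h₁ x₂ h₂ ▸ hle) s hs.symm
    exact ⟨this.1.symm, this.2.symm⟩
  · intro x y x₂ h₂ x₁ h₁ hle
    exact (mod2 x y x₁ h₁ x₂ h₂ (perm x₁ h₁ x₂ h₂ ▸ hle)).symm
  · intro x₂ h₂ x₁ h₁
    obtain ⟨x, hx⟩ := exi x₁ h₁ x₂ h₂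
    exact ⟨x, hx.symm (perm x₁ h₁ x₂ h₂)⟩
  · intro x
    obtain ⟨x₁, h₁, x₂, h₂, hx⟩ := onto x
    exact ⟨x₂, h₂, x₁, h₁, hx.symm (perm x₁ h₁ x₂ h₂)⟩

variable [IsRightRegularBand A]

theorem commute (h : CDirect c I₁ I₂) (x : A) : Commute c x :=
  let ⟨_, _, _, _, hx⟩ := h.exists_coords x
  hx.commute

theorem isLub2_mul_left (h : CDirect c I₁ I₂) (h₁ : x₁ ∈ I₁) (h₂ : x₂ ∈ I₂)
    (hx : IsPair c x₁ x₂ x) (y : A) : IsLub2 (y * x * x₁) (y * x * x₂) (y * x) :=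
  (h.2.1 x y x₁ h₁ x₂ h₂ (hx.mul_eq ▸ rle_refl _) x hx.isLub2).2

theorem isLub2_mul_mul (h : CDirect c I₁ I₂) (h₁ : x₁ ∈ I₁) (h₂ : x₂ ∈ I₂)
    (hx : IsPair c x₁ x₂ x) (y z : A) :
    IsLub2 (y * x * x₁ * z) (y * x * x₂ * z) (y * x * z) := by
  have hle : rle (y * x * c) (x₁ * x₂) := by
    rw [hx.mul_eq, mul_assoc]
    exact mul_rle_right _ _
  exact (h.2.1 (y * x) z x₁ h₁ x₂ h₂ hle (y * x) (h.isLub2_mul_left h₁ h₂ hx y)).1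

theorem isLub2_mul_right (h : CDirect c I₁ I₂) (h₁ : x₁ ∈ I₁) (h₂ : x₂ ∈ I₂)
    (hx : IsPair c x₁ x₂ x) (y : A) : IsLub2 (x * x₁ * y) (x * x₂ * y) (x * y) := by
  simpa only [mul_self] using h.isLub2_mul_mul h₁ h₂ hx x y

theorem isLub2_mul_fst (h : CDirect c I₁ I₂) (h₁ : x₁ ∈ I₁) (h₂ : x₂ ∈ I₂)
    (hx : IsPair c x₁ x₂ x) (y : A) : IsLub2 (y * x * x₁) (y * c * x₁) (y * x₁) :=
  ((h.2.2.1 x y x₁ h₁ x₂ h₂ hx.mul_rle).1 x₁ hx.isLub2_fst).2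

theorem isLub2_fst_mul (h : CDirect c I₁ I₂) (h₁ : x₁ ∈ I₁) (h₂ : x₂ ∈ I₂)
    (hx : IsPair c x₁ x₂ x) (y : A) : IsLub2 (x * x₁ * y) (c * x₁ * y) (x₁ * y) :=
  ((h.2.2.1 x y x₁ h₁ x₂ h₂ hx.mul_rle).1 x₁ hx.isLub2_fst).1

theorem mul_rle (h : CDirect c I₁ I₂) (ha : a ∈ I₁) (hb : b ∈ I₂) : rle (a * b) c := by
  obtain ⟨x, hx⟩ := h.exists_isPair ha hb
  rw [hx.mul_eq]
  exact mul_rle_right x c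

theorem mul_mul_rle (h : CDirect c I₁ I₂) (ha : a ∈ I₁) (hb : b ∈ I₂) (y : A) :
    rle (a * y * b) c := by
  obtain ⟨y₁, h₁, y₂, h₂, hy⟩ := h.exists_coords y
  refine (h.isLub2_mul_mul h₁ h₂ hy a b).least ?_ ?_
  · rw [mul_assoc]
    exact (mul_rle_right _ _).trans (h.mul_rle h₁ hb)
  · rw [mul_assoc a, hy.commute_snd.eq, ← mul_assoc, mul_assoc _ y]
    exact (h.mul_rle ha h₂).mul_right_of_commute (h.commute _)

theorem mul_mul_rle_fst (h : CDirect c I₁ I₂) (ha : a ∈ I₁) (h₁ : z₁ ∈ I₁) (h₂ : z₂ ∈ I₂)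
    (hz : IsPair c z₁ z₂ z) (y : A) : rle (a * y * z) z₁ := by
  refine (h.isLub2_mul_left h₁ h₂ hz (a * y)).least (mul_rle_right _ _) ?_
  have hle : rle (a * y * z * z₂) c := by
    rw [mul_assoc, hz.commute_snd.eq, ← mul_assoc]
    exact (h.mul_mul_rle ha h₂ y).mul_right_of_commute hz.commute
  have hzc : rle (z * c) z₁ := by
    rw [← hz.mul_eq, (h.perm h₁ h₂).eq]
    exact mul_rle_right z₂ z₁
  have heq : a * y * z * z₂ = a * y * z₂ * (z * c) := by
    rw [← hle.mul_eq, mul_assoc _ z, hz.commute_snd.eq]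
    simp only [mul_assoc]
  rw [heq]
  exact (mul_rle_right _ _).trans hzc

theorem mul_rle_fst (h : CDirect c I₁ I₂) (ha : a ∈ I₁) (h₁ : z₁ ∈ I₁) (h₂ : z₂ ∈ I₂)
    (hz : IsPair c z₁ z₂ z) : rle (a * z) z₁ := by
  simpa only [mul_self] using h.mul_mul_rle_fst ha h₁ h₂ hz a

theorem mul_rle_of_mul_eq_mul (h : CDirect c I₁ I₂) (hx₁ : x₁ ∈ I₁) (hy₁ : y₁ ∈ I₁)
    (hx₂ : x₂ ∈ I₂) (hy₂ : y₂ ∈ I₂) (heq : x₁ * x₂ = y₁ * y₂) : rle (x₁ * c) y₁ := by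
  have hle : rle (x₁ * x₂) y₁ := by
    rw [heq, (h.perm hy₁ hy₂).eq]
    exact mul_rle_right y₂ y₁
  exact ((h.2.2.2.1 y₁ hy₁ x₁ hx₁ x₂ hx₂ y₁).1 (isLub2_left_of_rle hle)).2.1

theorem fst_unique (h : CDirect c I₁ I₂) (hx₁ : x₁ ∈ I₁) (hy₁ : y₁ ∈ I₁) (hx₂ : x₂ ∈ I₂)
    (hy₂ : y₂ ∈ I₂) (hx : IsPair c x₁ x₂ x) (hy : IsPair c y₁ y₂ x) : x₁ = y₁ := by
  have fst_rle {u₁ v₁ u₂ v₂ : A} (hu₁ : u₁ ∈ I₁) (hv₁ : v₁ ∈ I₁) (hu₂ : u₂ ∈ I₂) (hv₂ : v₂ ∈ I₂)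
      (hu : IsPair c u₁ u₂ x) (hv : IsPair c v₁ v₂ x) : rle u₁ v₁ := by
    refine hu.isLub2_fst.least ?_ ?_
    · rw [hu.commute_fst.eq]
      exact h.mul_rle_fst hu₁ hv₁ hv₂ hv
    · rw [(h.commute u₁).eq]
      exact h.mul_rle_of_mul_eq_mul hu₁ hv₁ hu₂ hv₂ (hu.mul_eq.trans hv.mul_eq.symm)
  exact (fst_rle hx₁ hy₁ hx₂ hy₂ hx hy).antisymm (fst_rle hy₁ hx₁ hy₂ hx₂ hy hx)

theorem mul_fst_eq_mul_fst (h : CDirect c I₁ I₂) (h₁ : x₁ ∈ I₁) (h₂ : x₂ ∈ I₂)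
    (hx : IsPair c x₁ x₂ x) (hy : IsPair c x₁ x₂ y) : x * x₁ = y * x₁ := by
  have hlub_x : IsLub2 (y * x * x₁) (y * c * x₁) (y * x₁) := h.isLub2_mul_fst h₁ h₂ hx y
  have hlub_y : IsLub2 (y * x₁ * x) (c * x₁ * x) (x₁ * x) := h.isLub2_fst_mul h₁ h₂ hy x
  have heq : y * x * x₁ = y * x₁ * x := by rw [mul_assoc, hx.commute_fst.eq, mul_assoc]
  have heq_c : y * c * x₁ = c * x₁ * x := by
    rw [← hy.mul_eq, hx.mul_eq, ← hx.commute.eq, mul_assoc, hx.commute_fst.eq, mul_assoc]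
  rw [heq, heq_c] at hlub_x
  rw [hx.commute_fst.eq]
  exact hlub_y.unique hlub_x

theorem isPair_unique (h : CDirect c I₁ I₂) (h₁ : x₁ ∈ I₁) (h₂ : x₂ ∈ I₂)
    (hx : IsPair c x₁ x₂ x) (hy : IsPair c x₁ x₂ y) : x = y := by
  have hcomm := h.perm h₁ h₂
  have hlub := hx.isLub2
  rw [h.mul_fst_eq_mul_fst h₁ h₂ hx hy,
    h.symm.mul_fst_eq_mul_fst h₂ h₁ (hx.symm hcomm) (hy.symm hcomm)] at hlub
  exact hlub.unique hy.isLub2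

theorem mul_mul_fst (h : CDirect c I₁ I₂) (ha : a ∈ I₁) (h₁ : z₁ ∈ I₁) (h₂ : z₂ ∈ I₂)
    (hz : IsPair c z₁ z₂ z) : z * a * z₁ = a * z := by
  have hlub : IsLub2 (a * z) (z * a * c * z₁) (z * a * z₁) := by
    have := h.isLub2_mul_fst h₁ h₂ hz (z * a)
    rwa [mul_mul_self, (h.mul_rle_fst ha h₁ h₂ hz).mul_eq] at this
  have heq : z * a * c * z₁ = a * z * c :=
    calc z * a * c * z₁ = z * c * (a * z₁) := by
          simp only [mul_assoc, (h.commute a).left_comm]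
      _ = z₂ * (z₁ * a * z₁) := by
          rw [← hz.mul_eq, (h.perm h₁ h₂).eq]
          simp only [mul_assoc]
      _ = a * (z₁ * z₂) := by
          rw [mul_mul_self, ← mul_assoc, ← (h.perm ha h₂).eq, mul_assoc, (h.perm h₁ h₂).eq]
      _ = a * z * c := by rw [hz.mul_eq, mul_assoc]
  refine hlub.eq_left ?_
  rw [heq]
  exact mul_rle_left_of_commute (h.commute _)

theorem mul_mul_mul_fst (h : CDirect c I₁ I₂) (ha : a ∈ I₁) (h₁ : z₁ ∈ I₁) (h₂ : z₂ ∈ I₂)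
    (hz : IsPair c z₁ z₂ z) (x : A) : x * z * (a * z₁) = x * a * z := by
  rw [mul_assoc, ← mul_assoc z, h.mul_mul_fst ha h₁ h₂ hz, mul_assoc]

theorem commute_mul_fst (h : CDirect c I₁ I₂) (hx₁ : x₁ ∈ I₁) (hz₁ : z₁ ∈ I₁) (hz₂ : z₂ ∈ I₂)
    (hx : IsPair c x₁ x₂ x) (hz : IsPair c z₁ z₂ z) : Commute (x * z) (x₁ * z₁) := by
  have hle (y : A) : x₁ * y * z * z₁ = x₁ * y * z := h.mul_mul_rle_fst hx₁ hz₁ hz₂ hz y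
  calc x * z * (x₁ * z₁) = x₁ * x * z := by
        rw [h.mul_mul_mul_fst hx₁ hz₁ hz₂ hz, hx.commute_fst.eq]
    _ = x₁ * x * z₁ * z := by rw [← hle x, mul_assoc _ z, hz.commute_fst.eq, mul_assoc _ z₁]
    _ = x₁ * (z₁ * x) * z * z₁ := by
        rw [mul_assoc x₁, ← mul_mul_self z₁ x, mul_assoc _ z, hz.commute_fst.eq]
        simp only [mul_assoc]
    _ = x₁ * z₁ * (x * z) := by
        rw [hle]
        simp only [mul_assoc]

theorem isLub2_fst_mul_fst (h : CDirect c I₁ I₂) (hx₁ : x₁ ∈ I₁) (hz₁ : z₁ ∈ I₁) (hx₂ : x₂ ∈ I₂)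
    (hz₂ : z₂ ∈ I₂) (hx : IsPair c x₁ x₂ x) (hz : IsPair c z₁ z₂ z) :
    IsLub2 (x * z * (x₁ * z₁)) (c * (x₁ * z₁)) (x₁ * z₁) := by
  have hlub_x : IsLub2 (x * x₁ * z₁) (c * x₁ * z₁) (x₁ * z₁) := h.isLub2_fst_mul hx₁ hx₂ hx z₁
  have hlub_z : IsLub2 (x * x₁ * z) (x * x₁ * c * z₁) (x * x₁ * z₁) := by
    have := h.isLub2_mul_fst hz₁ hz₂ hz (x * x₁)
    rwa [hx.commute_fst.eq, (h.mul_mul_rle_fst hx₁ hz₁ hz₂ hz x).mul_eq,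
      ← hx.commute_fst.eq] at this
  have hle : rle (x * x₁ * c * z₁) (c * x₁ * z₁) := by
    rw [mul_assoc x, ← (h.commute x₁).eq, mul_assoc x]
    exact mul_rle_right _ _
  rw [h.mul_mul_mul_fst hx₁ hz₁ hz₂ hz, ← mul_assoc]
  exact hlub_z.trans_left hlub_x hle

theorem isPair_mul (h : CDirect c I₁ I₂) (hx₁ : x₁ ∈ I₁) (hx₂ : x₂ ∈ I₂) (hz₁ : z₁ ∈ I₁)
    (hz₂ : z₂ ∈ I₂) (hx : IsPair c x₁ x₂ x) (hz : IsPair c z₁ z₂ z) :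
    IsPair c (x₁ * z₁) (x₂ * z₂) (x * z) := by
  have hx' := hx.symm (h.perm hx₁ hx₂)
  have hz' := hz.symm (h.perm hz₁ hz₂)
  have hlub : IsLub2 (x * z * (x₁ * z₁)) (x * z * (x₂ * z₂)) (x * z) := by
    rw [h.mul_mul_mul_fst hx₁ hz₁ hz₂ hz, h.symm.mul_mul_mul_fst hx₂ hz₂ hz₁ hz']
    exact h.isLub2_mul_right hx₁ hx₂ hx z
  have hmul : x₁ * z₁ * (x₂ * z₂) = x * z * c := by
    rw [(h.perm hz₁ hx₂).mul_mul_mul_comm, hx.mul_eq, hz.mul_eq, hz.commute.mul_mul_mul_comm,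
      mul_self]
  exact ⟨⟨h.commute_mul_fst hx₁ hz₁ hz₂ hx hz, h.symm.commute_mul_fst hx₂ hz₂ hz₁ hx' hz'⟩, hlub,
    h.isLub2_fst_mul_fst hx₁ hz₁ hx₂ hz₂ hx hz, h.symm.isLub2_fst_mul_fst hx₂ hz₂ hx₁ hz₁ hx' hz',
    hmul⟩

end CDirect

end RRBFactor

/-- If `A = I1 ×_c I2` for a central element `c` of a right regular band `A`
and subsemigroups `I1`, `I2`, then `x = ⟨⟨x1,x2⟩⟩_c` defines a semigroup
isomorphism between the direct product `I1 × I2` (with componentwise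
multiplication) and `A`. -/
theorem rrb_representation_iso {A : Type*} [Semigroup A]
    (idem : ∀ x : A, x * x = x) (rrb : ∀ a b : A, a * b * a = b * a)
    (c : A) (hc : ∀ x : A, c * x = x * c)
    (I1 I2 : Subsemigroup A)
    (hdp : CDirect c (I1 : Set A) (I2 : Set A)) :
    ∃ Φ : ↥I1 × ↥I2 → A,
      Function.Bijective Φ ∧
      (∀ (p : ↥I1 × ↥I2) (x : A), Φ p = x ↔ IsPair c (p.1 : A) (p.2 : A) x) ∧
      (∀ p q : ↥I1 × ↥I2, Φ (p * q) = Φ p * Φ q) := by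
  have : IsRightRegularBand A := ⟨idem, rrb⟩
  choose Φ hΦ using fun p : I1 × I2 ↦ hdp.exists_isPair p.1.2 p.2.2
  have hΦ_iff (p : I1 × I2) (x : A) : Φ p = x ↔ IsPair c p.1 p.2 x :=
    ⟨fun hpx ↦ hpx ▸ hΦ p, hdp.isPair_unique p.1.2 p.2.2 (hΦ p)⟩
  refine ⟨Φ, ⟨fun p q hpq ↦ ?_, fun x ↦ ?_⟩, hΦ_iff, fun p q ↦ ?_⟩
  · have hp : IsPair c p.1 p.2 (Φ q) := hpq ▸ hΦ p
    have hfst := hdp.fst_unique p.1.2 q.1.2 p.2.2 q.2.2 hp (hΦ q)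
    have hsnd := hdp.symm.fst_unique p.2.2 q.2.2 p.1.2 q.1.2
      (hp.symm (hdp.perm p.1.2 p.2.2)) ((hΦ q).symm (hdp.perm q.1.2 q.2.2))
    exact Prod.ext (Subtype.ext hfst) (Subtype.ext hsnd)
  · obtain ⟨x₁, h₁, x₂, h₂, hx⟩ := hdp.exists_coords x
    exact ⟨(⟨x₁, h₁⟩, ⟨x₂, h₂⟩), (hΦ_iff _ x).2 hx⟩
  · exact (hΦ_iff _ _).2 (hdp.isPair_mul p.1.2 p.2.2 q.1.2 q.2.2 (hΦ p) (hΦ q))
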